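/- Let X* = P_{k₂} C Q_{k₁}ᵀ for some C ∈ ℝ^{k₂×k₁}, let E ∈ ℝ^{p×n}, and set X = X* + E. Let φ : ℝ^{p×n} → ℝ be nonnegative, convex, and even. Let γ > 0, assume λ_{k₁+1} > 0 and ω_{k₂+1} > 0, and set γ₁ = γ/λ_{k₁+1} and γ₂ = γ/ω_{k₂+1}. If U* ∈ ℝ^{p×n} is a global minimizer of U ↦ φ(U − X) + γ₁·tr(U L₁ Uᵀ) + γ₂·tr(Uᵀ L₂ U), then ‖U* Q̄_{k₁}‖_F² + ‖P̄_{k₂}ᵀ U*‖_F² ≤ (1/γ)·φ(E) + ‖X*‖_F²·(λ_{k₁}/λ_{k₁+1} + ω_{k₂}/ω_{k₂+1}). -/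

import Mathlib

/-!
The minimizer is compared with the competitor `U = X*`, whose loss is `φ (-E) = φ E` by evenness;
the loss of the minimizer is dropped by nonnegativity. In the eigenbasis,
`tr (U L Uᵀ) = ∑ i j, λ j * (U Q) i j ^ 2` (`trace_eq_sum`). Keeping only the last columns and using
monotonicity of `λ` gives `λ_{k+1} ‖U Q̄_k‖² ≤ tr (U L Uᵀ)` (`lower_bound`). If the rows of `U` lie
in the span of the first `k` eigenvectors, only the first `k` columns of `U Q` survive, so
`tr (U L Uᵀ) ≤ λ_k ‖U‖²` (`upper_bound`). Both are applied to `L₁`, and to `L₂` after transposing;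
dividing by `γ` yields the claim.
-/

open Matrix BigOperators

/-- Squared Frobenius norm of a real matrix. -/
noncomputable def frobSq {m n : ℕ} (A : Matrix (Fin m) (Fin n) ℝ) : ℝ :=
  ∑ i, ∑ j, (A i j) ^ 2

theorem frobSq_transpose {m n : ℕ} (A : Matrix (Fin m) (Fin n) ℝ) : frobSq Aᵀ = frobSq A := by
  unfold frobSq
  rw [Finset.sum_comm]
  rfl

theorem frobSq_eq_trace {m n : ℕ} (A : Matrix (Fin m) (Fin n) ℝ) :
    frobSq A = Matrix.trace (A * Aᵀ) := by
  simp [frobSq, Matrix.trace, Matrix.mul_apply, sq]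

theorem frobSq_mul_orthogonal {m n : ℕ} (A : Matrix (Fin m) (Fin n) ℝ)
    (Q : Matrix (Fin n) (Fin n) ℝ) (hQ : Q * Qᵀ = 1) : frobSq (A * Q) = frobSq A := by
  rw [frobSq_eq_trace, frobSq_eq_trace, Matrix.transpose_mul, Matrix.mul_assoc,
    ← Matrix.mul_assoc Q, hQ, Matrix.one_mul]

theorem trace_eq_sum {m n : ℕ} (U : Matrix (Fin m) (Fin n) ℝ)
    (Q : Matrix (Fin n) (Fin n) ℝ) (lam : Fin n → ℝ) :
    Matrix.trace (U * (Q * Matrix.diagonal lam * Qᵀ) * Uᵀ)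
      = ∑ i, ∑ j, lam j * ((U * Q) i j) ^ 2 := by
  have h : U * (Q * Matrix.diagonal lam * Qᵀ) * Uᵀ
      = (U * Q) * Matrix.diagonal lam * (U * Q)ᵀ := by
    simp only [Matrix.transpose_mul, Matrix.mul_assoc]
  rw [h, Matrix.trace]
  refine Finset.sum_congr rfl fun i _ => ?_
  rw [Matrix.diag_apply, Matrix.mul_apply]
  refine Finset.sum_congr rfl fun j _ => ?_
  rw [Matrix.mul_diagonal, Matrix.transpose_apply]
  ring

theorem lower_bound {m n k : ℕ} (hk : k < n) (U : Matrix (Fin m) (Fin n) ℝ)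
    (Q : Matrix (Fin n) (Fin n) ℝ) (lam : Fin n → ℝ)
    (h0 : ∀ i, 0 ≤ lam i) (hmono : Monotone lam) :
    lam ⟨k, hk⟩ *
        frobSq (U * Matrix.of fun (i : Fin n) (j : Fin (n - k)) => Q i ⟨k + j, by omega⟩)
      ≤ Matrix.trace (U * (Q * Matrix.diagonal lam * Qᵀ) * Uᵀ) := by
  rw [trace_eq_sum, frobSq, Finset.mul_sum]
  refine Finset.sum_le_sum fun i _ => ?_
  rw [Finset.mul_sum]
  let e : Fin (n - k) ↪ Fin n :=
    ⟨fun j => ⟨k + j, by omega⟩, fun a b hab => by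
      have := congrArg Fin.val hab
      simp only at this
      exact Fin.ext (by omega)⟩
  calc _ ≤ ∑ j : Fin (n - k), lam (e j) * ((U * Q) i (e j)) ^ 2 := by
        refine Finset.sum_le_sum fun j _ => ?_
        exact mul_le_mul_of_nonneg_right (hmono (Fin.le_def.2 (Nat.le_add_right k j))) (sq_nonneg _)
    _ = ∑ j ∈ Finset.univ.map e, lam j * ((U * Q) i j) ^ 2 := by rw [Finset.sum_map]
    _ ≤ _ := Finset.sum_le_sum_of_subset_of_nonneg (Finset.subset_univ _)
        fun j _ _ => mul_nonneg (h0 j) (sq_nonneg _)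

/-- Here `lam ⟨k - 1, _⟩` is the `k`-th smallest eigenvalue, the indices starting at `0`. -/
theorem upper_bound {m n k : ℕ} (hk1 : 1 ≤ k) (hk : k < n) (U : Matrix (Fin m) (Fin n) ℝ)
    (A : Matrix (Fin m) (Fin k) ℝ)
    (Q : Matrix (Fin n) (Fin n) ℝ) (lam : Fin n → ℝ) (hQ₁ : Qᵀ * Q = 1) (hQ₂ : Q * Qᵀ = 1)
    (hmono : Monotone lam)
    (hU : U = A * (Matrix.of fun (i : Fin n) (j : Fin k) => Q i ⟨j, by omega⟩)ᵀ) :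
    Matrix.trace (U * (Q * Matrix.diagonal lam * Qᵀ) * Uᵀ)
      ≤ lam ⟨k - 1, by omega⟩ * frobSq U := by
  rw [trace_eq_sum, ← frobSq_mul_orthogonal U Q hQ₂, frobSq, Finset.mul_sum]
  refine Finset.sum_le_sum fun i _ => ?_
  rw [Finset.mul_sum]
  refine Finset.sum_le_sum fun j _ => ?_
  by_cases hj : (j : ℕ) < k
  · exact mul_le_mul_of_nonneg_right (hmono (Fin.le_def.2 (Nat.le_sub_one_of_lt hj))) (sq_nonneg _)
  · -- columns of `U * Q` beyond the first `k` vanish by orthogonality of the columns of `Q`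
    have hz : (U * Q) i j = 0 := by
      rw [hU, Matrix.mul_assoc, Matrix.mul_apply]
      refine Finset.sum_eq_zero fun l _ => ?_
      have h1 : ((Matrix.of fun (i : Fin n) (j : Fin k) => Q i ⟨j, by omega⟩)ᵀ * Q) l j
          = (Qᵀ * Q) ⟨l, by omega⟩ j := rfl
      rw [h1, hQ₁, Matrix.one_apply_ne, mul_zero]
      intro h
      have := congrArg Fin.val h
      simp only at this
      omega
    simp [hz]

/-- The scalar part of the argument: `F₁, F₂` are the two energies of the minimizer to be bounded,
`T₁, T₂` and `V₁, V₂` the regularizers at the minimizer and at the competitor, `d` and `e` the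
corresponding losses. -/
theorem scalar_bound {γ γ₁ γ₂ a b a' b' F₁ F₂ S T₁ T₂ V₁ V₂ d e : ℝ} (hγ : 0 < γ)
    (hlam_pos : 0 < a) (hom_pos : 0 < b) (hγ₁ : γ₁ = γ / a) (hγ₂ : γ₂ = γ / b) (hn : 0 ≤ d)
    (hmin : d + γ₁ * T₁ + γ₂ * T₂ ≤ e + γ₁ * V₁ + γ₂ * V₂)
    (l1 : a * F₁ ≤ T₁) (l2 : b * F₂ ≤ T₂) (u1 : V₁ ≤ a' * S) (u2 : V₂ ≤ b' * S) :
    F₁ + F₂ ≤ (1 / γ) * e + S * (a' / a + b' / b) := by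
  have g1 : 0 < γ₁ := hγ₁ ▸ div_pos hγ hlam_pos
  have g2 : 0 < γ₂ := hγ₂ ▸ div_pos hγ hom_pos
  have l1' := mul_le_mul_of_nonneg_left l1 g1.le
  have l2' := mul_le_mul_of_nonneg_left l2 g2.le
  have u1' := mul_le_mul_of_nonneg_left u1 g1.le
  have u2' := mul_le_mul_of_nonneg_left u2 g2.le
  have e1 : γ₁ * (a * F₁) = γ * F₁ := by rw [hγ₁]; field_simp
  have e2 : γ₂ * (b * F₂) = γ * F₂ := by rw [hγ₂]; field_simp
  have key : γ * (F₁ + F₂) ≤ e + γ₁ * (a' * S) + γ₂ * (b' * S) := by linarith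
  have e3 : (1 / γ) * e + S * (a' / a + b' / b)
      = (e + γ₁ * (a' * S) + γ₂ * (b' * S)) / γ := by
    rw [hγ₁, hγ₂]
    field_simp
    ring
  rw [e3, le_div_iff₀ hγ]
  linarith

theorem frpcag_bound_normalized {p n k₁ k₂ : ℕ}
    (hk₁1 : 1 ≤ k₁) (hk₁n : k₁ < n) (hk₂1 : 1 ≤ k₂) (hk₂p : k₂ < p)
    -- eigendecomposition of the sample graph Laplacian L₁ = Q Λ Qᵀ
    (L₁ : Matrix (Fin n) (Fin n) ℝ) (Q : Matrix (Fin n) (Fin n) ℝ) (lam : Fin n → ℝ)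
    (hQ₁ : Qᵀ * Q = 1) (hQ₂ : Q * Qᵀ = 1)
    (hlam_nonneg : ∀ i, 0 ≤ lam i) (hlam_mono : Monotone lam)
    (hL₁ : L₁ = Q * Matrix.diagonal lam * Qᵀ)
    -- eigendecomposition of the feature graph Laplacian L₂ = P Ω Pᵀ
    (L₂ : Matrix (Fin p) (Fin p) ℝ) (P : Matrix (Fin p) (Fin p) ℝ) (om : Fin p → ℝ)
    (hP₁ : Pᵀ * P = 1) (hP₂ : P * Pᵀ = 1)
    (hom_nonneg : ∀ i, 0 ≤ om i) (hom_mono : Monotone om)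
    (hL₂ : L₂ = P * Matrix.diagonal om * Pᵀ)
    -- the (k₁,k₂)-low-rank matrix X* = P_{k₂} C Q_{k₁}ᵀ, the noise E and the data X
    (C : Matrix (Fin k₂) (Fin k₁) ℝ)
    (Xstar : Matrix (Fin p) (Fin n) ℝ)
    (hXstar : Xstar = (Matrix.of fun (i : Fin p) (j : Fin k₂) => P i ⟨j, by omega⟩) * C *
      (Matrix.of fun (i : Fin n) (j : Fin k₁) => Q i ⟨j, by omega⟩)ᵀ)
    (E X : Matrix (Fin p) (Fin n) ℝ) (hX : X = Xstar + E)
    -- the loss function φ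
    (φ : Matrix (Fin p) (Fin n) ℝ → ℝ)
    (hφ_nonneg : ∀ A, 0 ≤ φ A) (hφ_convex : ConvexOn ℝ Set.univ φ)
    (hφ_even : ∀ A, φ (-A) = φ A)
    -- the regularization parameters
    (γ γ₁ γ₂ : ℝ) (hγ : 0 < γ)
    (hlam_pos : 0 < lam ⟨k₁, hk₁n⟩) (hom_pos : 0 < om ⟨k₂, hk₂p⟩)
    (hγ₁ : γ₁ = γ / lam ⟨k₁, hk₁n⟩) (hγ₂ : γ₂ = γ / om ⟨k₂, hk₂p⟩)
    -- U* is a global minimizer of the FRPCAG objective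
    (Ustar : Matrix (Fin p) (Fin n) ℝ)
    (hUstar : ∀ U : Matrix (Fin p) (Fin n) ℝ,
      φ (Ustar - X) + γ₁ * Matrix.trace (Ustar * L₁ * Ustarᵀ) +
          γ₂ * Matrix.trace (Ustarᵀ * L₂ * Ustar) ≤
        φ (U - X) + γ₁ * Matrix.trace (U * L₁ * Uᵀ) +
          γ₂ * Matrix.trace (Uᵀ * L₂ * U)) :
    frobSq (Ustar * Matrix.of fun (i : Fin n) (j : Fin (n - k₁)) => Q i ⟨k₁ + j, by omega⟩) +
      frobSq ((Matrix.of fun (i : Fin p) (j : Fin (p - k₂)) => P i ⟨k₂ + j, by omega⟩)ᵀ * Ustar)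
    ≤ (1 / γ) * φ E + frobSq Xstar *
        (lam ⟨k₁ - 1, by omega⟩ / lam ⟨k₁, hk₁n⟩ +
          om ⟨k₂ - 1, by omega⟩ / om ⟨k₂, hk₂p⟩) := by
  subst hL₁ hL₂ hX
  have hmin := hUstar Xstar
  have hE : φ (Xstar - (Xstar + E)) = φ E := by
    rw [← hφ_even E]
    congr 1
    abel
  rw [hE] at hmin
  have l1 := lower_bound hk₁n Ustar Q lam hlam_nonneg hlam_mono
  have l2 := lower_bound hk₂p Ustarᵀ P om hom_nonneg hom_mono
  have u1 := upper_bound hk₁1 hk₁n Xstar _ Q lam hQ₁ hQ₂ hlam_mono hXstar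
  have u2 := upper_bound hk₂1 hk₂p Xstarᵀ
    ((Matrix.of fun (i : Fin n) (j : Fin k₁) => Q i ⟨j, by omega⟩) * Cᵀ) P om hP₁ hP₂ hom_mono
    (by rw [hXstar]; simp only [Matrix.transpose_mul, Matrix.transpose_transpose, Matrix.mul_assoc])
  rw [← frobSq_transpose, Matrix.transpose_mul, Matrix.transpose_transpose] at l2
  rw [Matrix.transpose_transpose, frobSq_transpose] at u2
  exact scalar_bound hγ hlam_pos hom_pos hγ₁ hγ₂ (hφ_nonneg _) hmin l1 l2 u1 u2
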